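/- arXiv:1603.07175 — 2 statements merged into one kernel-verified Lean document; each statement's English description precedes it below -/
import Mathlib

section
/- There holds the identity ∫_ℝ p(p−1) w(x)^{p−2} w'(x) w₁(x) w₂(x) dx = −∫_ℝ w'(x) w₁(x) dx + ∫_ℝ (w'(x) + σ^{−1} x w(x)) w₂'(x) dx. -/
open Real

lemma aux_exp_bound (a : ℝ) (ha : 0 < a) (x : ℝ) :
    (1 + |x|) * Real.exp (-a * |x|) ≤ (1 + 2 / a) * Real.exp (-(a/2) * |x|) := by
  have h1 := Real.add_one_le_exp ((a/2) * |x|)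
  have h2 : Real.exp (-a * |x|) = Real.exp (-(a/2) * |x|) * Real.exp (-(a/2) * |x|) := by
    rw [← Real.exp_add]; ring_nf
  have h3 : Real.exp (-(a/2) * |x|) * Real.exp ((a/2) * |x|) = 1 := by
    rw [← Real.exp_add]; ring_nf; simp
  have h4 : 1 + |x| ≤ (1 + 2 / a) * Real.exp ((a/2) * |x|) := by
    have h5 : 1 ≤ Real.exp ((a/2) * |x|) := Real.one_le_exp (by positivity)
    have h6 : |x| ≤ (2 / a) * Real.exp ((a/2) * |x|) := by
      calc |x| = (2 / a) * ((a/2) * |x|) := by field_simp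
        _ ≤ _ := by gcongr; linarith
    linarith
  calc (1 + |x|) * Real.exp (-a * |x|)
      ≤ ((1 + 2 / a) * Real.exp ((a/2) * |x|)) * Real.exp (-a * |x|) := by gcongr
    _ = (1 + 2 / a) * Real.exp (-(a/2) * |x|) *
          (Real.exp (-(a/2) * |x|) * Real.exp ((a/2) * |x|)) := by rw [h2]; ring
    _ = _ := by rw [h3, mul_one]

lemma aux_exp_integrable (a : ℝ) (ha : 0 < a) :
    MeasureTheory.Integrable (fun x : ℝ => Real.exp (-a * |x|)) := by
  refine MeasureTheory.Integrable.of_integral_ne_zero ?_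
  rw [integral_comp_abs (f := fun x => Real.exp (-a * x)),
    integral_exp_mul_Ioi (by linarith) 0]
  simp [ha.ne']

lemma aux_exp_tendsto (a : ℝ) (ha : 0 < a) {l : Filter ℝ}
    (hl : Filter.Tendsto (fun x : ℝ => |x|) l Filter.atTop) :
    Filter.Tendsto (fun x : ℝ => Real.exp (-a * |x|)) l (nhds 0) :=
  Real.tendsto_exp_atBot.comp (hl.const_mul_atTop_of_neg (by linarith))

/-- The identity
`∫ p(p−1) w^(p−2) w' w₁ w₂ = −∫ w' w₁ + ∫ (w' + σ⁻¹ x w) w₂'`. -/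
theorem integral_identity_w1_w2
    (p : ℝ) (hp : 1 < p) (σ : ℝ) (hσ : σ = (p + 1) / (p - 1) - 1 / 2)
    (w : ℝ → ℝ)
    (hw_pos : ∀ x, 0 < w x)
    (hw_smooth : ContDiff ℝ 2 w)
    (hw_eq : ∀ x, deriv (deriv w) x - w x + w x ^ p = 0)
    (hdecay : ∃ C₀ > (0:ℝ), ∃ a > (0:ℝ),
      ∀ x : ℝ, w x + |deriv w x| ≤ C₀ * Real.exp (-a * |x|))
    (w₂ : ℝ → ℝ)
    (hw₂ : w₂ = fun x => -(w x) / (p - 1) - (1 / 2) * x * deriv w x)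
    (w₁ : ℝ → ℝ)
    (hw₁_smooth : ContDiff ℝ 2 w₁)
    (hw₁_bdd : ∃ M : ℝ, ∀ x : ℝ, |w₁ x| + |deriv w₁ x| ≤ M)
    (hw₁_eq : ∀ x : ℝ,
      -(deriv (deriv w₁) x) + w₁ x - p * w x ^ (p - 1) * w₁ x
        = deriv w x + σ⁻¹ * x * w x) :
    (∫ x : ℝ, p * (p - 1) * w x ^ (p - 2) * deriv w x * w₁ x * w₂ x)
      = -(∫ x : ℝ, deriv w x * w₁ x)
        + ∫ x : ℝ, (deriv w x + σ⁻¹ * x * w x) * deriv w₂ x := by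
  obtain ⟨C, hC, a, ha, hd⟩ := hdecay
  obtain ⟨M, hM⟩ := hw₁_bdd
  have hp1 : 0 < p - 1 := by linarith
  have hb : 0 < a / 2 := by positivity
  -- derivatives
  obtain ⟨v, hv⟩ : ∃ v, v = deriv w := ⟨_, rfl⟩
  obtain ⟨z, hz⟩ : ∃ z, z = deriv w₁ := ⟨_, rfl⟩
  have hwd : ∀ x, HasDerivAt w (v x) x := fun x => by
    rw [hv]; exact (hw_smooth.differentiable (by norm_num) x).hasDerivAt
  have hw1d : ∀ x, HasDerivAt w₁ (z x) x := fun x => by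
    rw [hz]; exact (hw₁_smooth.differentiable (by norm_num) x).hasDerivAt
  have hvC : ContDiff ℝ 1 v := by
    rw [hv]; exact ((contDiff_succ_iff_deriv (n := 1)).1 hw_smooth).2.2
  have hzC : ContDiff ℝ 1 z := by
    rw [hz]; exact ((contDiff_succ_iff_deriv (n := 1)).1 hw₁_smooth).2.2
  rw [← hv] at hw_eq hw₂ hd hw₁_eq ⊢
  rw [← hz] at hw₁_eq hM
  have hvd : ∀ x, HasDerivAt v (w x - w x ^ p) x := fun x => by
    have := (hvC.differentiable (by norm_num) x).hasDerivAt
    rwa [show deriv v x = w x - w x ^ p by linarith [hw_eq x]] at this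
  have hzd : ∀ x, HasDerivAt z (w₁ x - p * w x ^ (p-1) * w₁ x - (v x + σ⁻¹ * x * w x)) x :=
    fun x => by
    have := (hzC.differentiable (by norm_num) x).hasDerivAt
    rwa [show deriv z x = w₁ x - p * w x ^ (p-1) * w₁ x - (v x + σ⁻¹ * x * w x) by
      linarith [hw₁_eq x]] at this
  have hwc : Continuous w := hw_smooth.continuous
  have hw1c : Continuous w₁ := hw₁_smooth.continuous
  have hvc : Continuous v := hvC.continuous
  have hzc : Continuous z := hzC.continuous
  have hrp : ∀ r : ℝ, ∀ x, HasDerivAt (fun x => w x ^ r) (v x * r * w x ^ (r - 1)) x :=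
    fun r x => (hwd x).rpow_const (Or.inl (hw_pos x).ne')
  have hrc : ∀ r : ℝ, Continuous (fun x => w x ^ r) :=
    fun r => hwc.rpow_const (fun x => Or.inl (hw_pos x).ne')
  have hpp : ∀ x, w x ^ p = w x * w x ^ (p-1) := fun x => by
    rw [Real.rpow_sub_one (hw_pos x).ne']; field_simp [(hw_pos x).ne']
  have hpp2 : ∀ x, w x ^ (p-1) = w x * w x ^ (p-2) := fun x => by
    rw [show p - 2 = p - 1 - 1 by ring, Real.rpow_sub_one (hw_pos x).ne' (p-1)]
    field_simp [(hw_pos x).ne']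
  obtain ⟨u, hu⟩ : ∃ u : ℝ → ℝ, u = fun x => - v x / (p-1) - v x / 2 - x * (w x - w x ^ p) / 2 :=
    ⟨_, rfl⟩
  obtain ⟨q, hq⟩ : ∃ q : ℝ → ℝ, q = fun x => w₂ x - p * w x ^ (p-1) * w₂ x - w x := ⟨_, rfl⟩
  have hw2d : ∀ x, HasDerivAt w₂ (u x) x := fun x => by
    have := ((hwd x).neg.div_const (p-1)).sub
      (((hasDerivAt_id x).const_mul (1/2)).mul (hvd x))
    rw [hw₂]
    refine HasDerivAt.congr_deriv this ?_
    rw [hu]; simp only [id]; ring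
  have hud : ∀ x, HasDerivAt u (q x) x := fun x => by
    have := (((hvd x).neg.div_const (p-1)).sub ((hvd x).div_const 2)).sub
      (((hasDerivAt_id x).mul ((hwd x).sub (hrp p x))).div_const 2)
    rw [hu]
    refine HasDerivAt.congr_deriv this ?_
    rw [hq, hw₂]; simp only [id, Pi.sub_apply, hpp]; field_simp; ring
  have hqd : ∀ x, HasDerivAt q
      (u x - p * (p-1) * w x ^ (p-2) * v x * w₂ x - p * w x ^ (p-1) * u x - v x) x := fun x => by
    have := ((hw2d x).sub (((hrp (p-1) x).const_mul p).mul (hw2d x))).sub (hwd x)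
    rw [hq]
    refine HasDerivAt.congr_deriv this ?_
    rw [show p - 1 - 1 = p - 2 by ring]; ring
  have hdu : deriv w₂ = u := funext fun x => (hw2d x).deriv
  rw [hdu]
  have hw2c : Continuous w₂ := continuous_iff_continuousAt.2 fun x => (hw2d x).continuousAt
  have huc : Continuous u := continuous_iff_continuousAt.2 fun x => (hud x).continuousAt
  -- filters
  have hT : Filter.Tendsto (fun x : ℝ => |x|) Filter.atTop Filter.atTop :=
    Filter.tendsto_abs_atTop_atTop
  have hB : Filter.Tendsto (fun x : ℝ => |x|) Filter.atBot Filter.atTop :=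
    Filter.tendsto_abs_atBot_atTop
  -- energy
  have hwC : ∀ x, w x ≤ C * Real.exp (-a * |x|) := fun x => by
    linarith [hd x, abs_nonneg (v x)]
  have hvb : ∀ x, |v x| ≤ C * Real.exp (-a * |x|) := fun x => by
    linarith [hd x, hw_pos x]
  have hwT : Filter.Tendsto w Filter.atTop (nhds 0) :=
    squeeze_zero (fun x => (hw_pos x).le) hwC (by simpa using (aux_exp_tendsto a ha hT).const_mul C)
  have hvT : Filter.Tendsto v Filter.atTop (nhds 0) :=
    squeeze_zero_norm hvb (by simpa using (aux_exp_tendsto a ha hT).const_mul C)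
  have hvw : ∀ x, |v x| ≤ w x := by
    have hE : ∀ x, HasDerivAt (fun x => v x ^ 2 / 2 - w x ^ 2 / 2 + w x ^ (p+1) / (p+1)) 0 x := by
      intro x
      have := ((((hvd x).pow 2).div_const 2).sub (((hwd x).pow 2).div_const 2)).add
        ((hrp (p+1) x).div_const (p+1))
      refine HasDerivAt.congr_deriv this ?_
      rw [show p + 1 - 1 = p by ring]
      have : p + 1 ≠ 0 := by linarith
      field_simp
      simp
      ring
    have hc : ∀ x y, _ = _ := is_const_of_deriv_eq_zero (fun x => (hE x).differentiableAt)
      (fun x => (hE x).deriv)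
    have hl : Filter.Tendsto (fun x => v x ^ 2 / 2 - w x ^ 2 / 2 + w x ^ (p+1) / (p+1))
        Filter.atTop (nhds 0) := by
      have := (((hvT.pow 2).div_const 2).sub ((hwT.pow 2).div_const 2)).add
        ((hwT.rpow_const (p := p + 1) (Or.inr (by linarith))).div_const (p+1))
      rw [Real.zero_rpow (by linarith)] at this
      simpa using this
    intro x
    have h0 : v x ^ 2 / 2 - w x ^ 2 / 2 + w x ^ (p+1) / (p+1) = 0 := by
      refine tendsto_nhds_unique ?_ hl
      refine tendsto_const_nhds.congr fun y => hc x y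
    have h1 : 0 ≤ w x ^ (p+1) / (p+1) :=
      div_nonneg (Real.rpow_nonneg (hw_pos x).le _) (by linarith)
    exact abs_le_of_sq_le_sq (by linarith) (hw_pos x).le
  -- bounds
  obtain ⟨B, hBdef⟩ : ∃ B : ℝ → ℝ, B = fun x => Real.exp (-(a/2) * |x|) := ⟨_, rfl⟩
  have hBpos : ∀ x, 0 < B x := fun x => by rw [hBdef]; exact Real.exp_pos _
  have hB1 : B =O[⊤] (fun _ => (1:ℝ)) := by
    refine Asymptotics.isBigO_top.2 ⟨1, fun x => ?_⟩
    rw [hBdef, Real.norm_eq_abs, abs_of_pos (Real.exp_pos _)]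
    simp only [norm_one, mul_one]
    exact Real.exp_le_one_iff.2 (by have := abs_nonneg x; nlinarith)
  have hwx : ∀ x, (1 + |x|) * w x ≤ C * (1 + 2 / a) * B x := fun x => by
    calc (1 + |x|) * w x ≤ (1 + |x|) * (C * Real.exp (-a * |x|)) := by
          gcongr; exact hwC x
      _ = C * ((1 + |x|) * Real.exp (-a * |x|)) := by ring
      _ ≤ C * ((1 + 2 / a) * Real.exp (-(a/2) * |x|)) := by
          gcongr C * ?_; exact aux_exp_bound a ha x
      _ = _ := by rw [hBdef]; ring
  have hwO : w =O[⊤] B := Asymptotics.isBigO_top.2 ⟨C * (1 + 2 / a), fun x => by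
    rw [Real.norm_eq_abs, Real.norm_eq_abs, abs_of_pos (hBpos x), abs_of_pos (hw_pos x)]
    have := mul_nonneg (abs_nonneg x) (hw_pos x).le
    linarith [hwx x]⟩
  have hxwO : (fun x => x * w x) =O[⊤] B := Asymptotics.isBigO_top.2 ⟨C * (1 + 2 / a), fun x => by
    rw [Real.norm_eq_abs, Real.norm_eq_abs, abs_of_pos (hBpos x), abs_mul, abs_of_pos (hw_pos x)]
    linarith [hwx x, hw_pos x]⟩
  have hvwO : v =O[⊤] w := Asymptotics.isBigO_top.2 ⟨1, fun x => by
    rw [Real.norm_eq_abs, Real.norm_eq_abs, abs_of_pos (hw_pos x), one_mul]; exact hvw x⟩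
  have hvO : v =O[⊤] B := hvwO.trans hwO
  have hxvO : (fun x => x * v x) =O[⊤] B :=
    ((Asymptotics.isBigO_refl (fun x : ℝ => x) ⊤).mul hvwO).trans hxwO
  have hwle : ∀ x, w x ≤ C := fun x => (hwC x).trans (by
    have : Real.exp (-a * |x|) ≤ 1 := Real.exp_le_one_iff.2 (by have := abs_nonneg x; nlinarith)
    nlinarith)
  have hrO : (fun x => w x ^ (p-1)) =O[⊤] (fun _ => (1:ℝ)) :=
    Asymptotics.isBigO_top.2 ⟨C ^ (p-1), fun x => by
      rw [Real.norm_eq_abs, abs_of_pos (Real.rpow_pos_of_pos (hw_pos x) _)]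
      simpa using Real.rpow_le_rpow (hw_pos x).le (hwle x) hp1.le⟩
  have hw1O : w₁ =O[⊤] (fun _ => (1:ℝ)) := Asymptotics.isBigO_top.2 ⟨M, fun x => by
    simpa using (by linarith [hM x, abs_nonneg (z x)] : |w₁ x| ≤ M)⟩
  have hzO : z =O[⊤] (fun _ => (1:ℝ)) := Asymptotics.isBigO_top.2 ⟨M, fun x => by
    simpa using (by linarith [hM x, abs_nonneg (w₁ x)] : |z x| ≤ M)⟩
  have hmul : ∀ f g : ℝ → ℝ, f =O[⊤] (fun _ => (1:ℝ)) → g =O[⊤] B →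
      (fun x => f x * g x) =O[⊤] B := fun f g hf hg => by simpa using hf.mul hg
  have hw2O : w₂ =O[⊤] B := by
    have := (hwO.const_mul_left (-1/(p-1))).add (hxvO.const_mul_left (-1/2))
    refine this.congr_left fun x => ?_
    rw [hw₂]; ring
  have huO : u =O[⊤] B := by
    have := ((hvO.const_mul_left (-1/(p-1) - 1/2)).add (hxwO.const_mul_left (-1/2))).add
      ((hmul _ _ hrO hxwO).const_mul_left (1/2))
    refine this.congr_left fun x => ?_
    rw [hu]; simp only [hpp]; ring
  have hqO : q =O[⊤] B := by
    have := (hw2O.sub ((hmul _ _ hrO hw2O).const_mul_left p)).sub hwO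
    refine this.congr_left fun x => ?_
    rw [hq]; ring
  have hint : ∀ f : ℝ → ℝ, Continuous f → f =O[⊤] B → MeasureTheory.Integrable f := by
    intro f hf hO
    obtain ⟨K, hK⟩ := Asymptotics.isBigO_top.1 hO
    have hBi : MeasureTheory.Integrable B := by rw [hBdef]; exact aux_exp_integrable _ hb
    exact (hBi.norm.const_mul K).mono' hf.aestronglyMeasurable (Filter.Eventually.of_forall hK)
  have I1 : MeasureTheory.Integrable
      (fun x => p * (p - 1) * w x ^ (p - 2) * v x * w₁ x * w₂ x) := by
    refine hint _ ?_ ?_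
    · have := hrc (p-2)
      fun_prop
    · have h1 : (fun x => w x ^ (p-2) * v x) =O[⊤] (fun _ => (1:ℝ)) := by
        refine (((Asymptotics.isBigO_refl (fun x => w x ^ (p-2)) ⊤).mul hvwO).congr_right
          fun x => ?_).trans hrO
        rw [hpp2]; ring
      refine ((hmul _ _ h1 (hmul _ _ hw1O hw2O)).const_mul_left (p * (p-1))).congr_left
        fun x => ?_
      ring
  have I2 : MeasureTheory.Integrable (fun x => v x * w₁ x) :=
    hint _ (by fun_prop) ((hmul _ _ hw1O hvO).congr_left fun x => mul_comm _ _)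
  have I3 : MeasureTheory.Integrable (fun x => (v x + σ⁻¹ * x * w x) * u x) := by
    refine hint _ (by fun_prop) (hmul _ _ ?_ huO)
    refine ((hvO.add (hxwO.const_mul_left σ⁻¹)).congr_left fun x => ?_).trans hB1
    ring
  have hF : ∀ x, HasDerivAt (fun x => z x * u x - w₁ x * q x)
      (p * (p - 1) * w x ^ (p - 2) * v x * w₁ x * w₂ x + v x * w₁ x
        - (v x + σ⁻¹ * x * w x) * u x) x := fun x => by
    have := ((hzd x).mul (hud x)).sub ((hw1d x).mul (hqd x))
    refine HasDerivAt.congr_deriv this ?_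
    ring
  have hFO : (fun x => z x * u x - w₁ x * q x) =O[⊤] B :=
    (hmul _ _ hzO huO).sub (hmul _ _ hw1O hqO)
  have hlim : ∀ l : Filter ℝ, Filter.Tendsto (fun x : ℝ => |x|) l Filter.atTop →
      Filter.Tendsto (fun x => z x * u x - w₁ x * q x) l (nhds 0) := fun l hl => by
    refine (hFO.mono le_top).trans_tendsto ?_
    rw [hBdef]; exact aux_exp_tendsto _ hb hl
  have key := MeasureTheory.integral_of_hasDerivAt_of_tendsto hF ((I1.add I2).sub I3)
    (hlim _ hB) (hlim _ hT)
  have e1 := MeasureTheory.integral_sub (I1.add I2) I3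
  have e2 := MeasureTheory.integral_add I1 I2
  simp only [Pi.add_apply] at e1 e2
  rw [e1, e2] at key
  linarith
end

section
/- There holds the cancellation identity ∫_ℝ [ p(p−1) w(x)^{p−2} w'(x) w₁(x) w₂(x) + w₂'(x) w'(x) + σ^{−1} x w₂(x) w'(x) + w₁(x) w'(x) ] dx = −∫_ℝ w'(x)² dx. -/
open Real

namespace CancAux
open MeasureTheory Filter Topology

/-- exponential decay -/
def ED (f : ℝ → ℝ) : Prop := ∃ K, ∃ b > (0:ℝ), ∀ x, |f x| ≤ K * exp (-b * |x|)

/-- boundedness -/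
def BD (f : ℝ → ℝ) : Prop := ∃ K, ∀ x, |f x| ≤ K

lemma ED.nonneg {f : ℝ → ℝ} {K b : ℝ} (h : ∀ x, |f x| ≤ K * exp (-b * |x|)) : 0 ≤ K := by
  have := h 0
  simp at this
  exact (abs_nonneg _).trans this

lemma ED.add {f g : ℝ → ℝ} (hf : ED f) (hg : ED g) : ED (fun x => f x + g x) := by
  obtain ⟨K, b, hb, h⟩ := hf
  obtain ⟨L, c, hc, k⟩ := hg
  have hK := ED.nonneg h
  have hL := ED.nonneg k
  refine ⟨K + L, min b c, lt_min hb hc, fun x => ?_⟩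
  have e1 : exp (-b * |x|) ≤ exp (-(min b c) * |x|) := by
    gcongr; exact min_le_left _ _
  have e2 : exp (-c * |x|) ≤ exp (-(min b c) * |x|) := by
    gcongr; exact min_le_right _ _
  calc |f x + g x| ≤ |f x| + |g x| := abs_add_le _ _
    _ ≤ K * exp (-b * |x|) + L * exp (-c * |x|) := add_le_add (h x) (k x)
    _ ≤ K * exp (-(min b c) * |x|) + L * exp (-(min b c) * |x|) := by gcongr
    _ = _ := by ring

lemma ED.bmul {f g : ℝ → ℝ} (hf : BD f) (hg : ED g) : ED (fun x => f x * g x) := by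
  obtain ⟨K, h⟩ := hf
  obtain ⟨L, c, hc, k⟩ := hg
  refine ⟨K * L, c, hc, fun x => ?_⟩
  rw [abs_mul, mul_assoc]
  exact mul_le_mul (h x) (k x) (abs_nonneg _) ((abs_nonneg _).trans (h 0))

lemma ED.cmul {g : ℝ → ℝ} (c : ℝ) (hg : ED g) : ED (fun x => c * g x) :=
  ED.bmul (f := fun _ => c) ⟨|c|, fun _ => le_rfl⟩ hg

lemma ED.bd {f : ℝ → ℝ} (hf : ED f) : BD f := by
  obtain ⟨K, b, hb, h⟩ := hf
  refine ⟨K, fun x => (h x).trans ?_⟩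
  have : exp (-b * |x|) ≤ 1 := by
    rw [exp_le_one_iff]; have := abs_nonneg x; nlinarith
  nlinarith [ED.nonneg h]

lemma ED.mul {f g : ℝ → ℝ} (hf : ED f) (hg : ED g) : ED (fun x => f x * g x) :=
  ED.bmul hf.bd hg

lemma ED.xmul {f : ℝ → ℝ} (hf : ED f) : ED (fun x => x * f x) := by
  obtain ⟨K, b, hb, h⟩ := hf
  have hK := ED.nonneg h
  refine ⟨2 / b * K, b / 2, by positivity, fun x => ?_⟩
  have h1 : |x| ≤ 2 / b * exp (b / 2 * |x|) := by
    have := add_one_le_exp (b / 2 * |x|)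
    have h2 : |x| = 2 / b * (b / 2 * |x|) := by field_simp
    calc |x| = 2 / b * (b / 2 * |x|) := h2
      _ ≤ _ := by gcongr; linarith
  rw [abs_mul]
  calc |x| * |f x| ≤ (2 / b * exp (b / 2 * |x|)) * (K * exp (-b * |x|)) :=
        mul_le_mul h1 (h x) (abs_nonneg _) (by positivity)
    _ = 2 / b * K * (exp (b / 2 * |x|) * exp (-b * |x|)) := by ring
    _ = _ := by rw [← exp_add]; congr 2; ring

lemma int_exp {b : ℝ} (hb : 0 < b) : Integrable (fun x : ℝ => exp (-b * |x|)) := by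
  rw [← integrableOn_univ, ← Set.Iic_union_Ioi (a := (0:ℝ))]
  refine IntegrableOn.union ?_ ?_
  · refine (integrableOn_exp_mul_Iic hb 0).congr_fun (fun x hx => ?_) measurableSet_Iic
    simp only [abs_of_nonpos (Set.mem_Iic.1 hx)]
    congr 1; ring
  · refine (exp_neg_integrableOn_Ioi 0 hb).congr_fun (fun x hx => ?_) measurableSet_Ioi
    simp only [abs_of_pos (Set.mem_Ioi.1 hx)]

lemma ED.integrable {f : ℝ → ℝ} (hf : ED f) (hc : Continuous f) : Integrable f := by
  obtain ⟨K, b, hb, h⟩ := hf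
  exact ((int_exp hb).const_mul K).mono' hc.aestronglyMeasurable (Eventually.of_forall h)

lemma ED.tendsto {f : ℝ → ℝ} (hf : ED f) {l : Filter ℝ} (hl : Tendsto (fun x : ℝ => |x|) l atTop) :
    Tendsto f l (𝓝 0) := by
  obtain ⟨K, b, hb, h⟩ := hf
  refine squeeze_zero_norm h ?_
  have : Tendsto (fun x : ℝ => -b * |x|) l atBot := hl.const_mul_atTop_of_neg (by linarith)
  simpa using (tendsto_exp_atBot.comp this).const_mul K

lemma hda {f g : ℝ → ℝ} {a b x : ℝ} (h : HasDerivAt f a x) (hg : ∀ y, g y = f y) (hb : b = a) :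
    HasDerivAt g b x := by
  rw [hb, funext hg]; exact h

end CancAux

open CancAux MeasureTheory Filter Topology in
/-- The cancellation identity
`∫ [ p(p−1) w^(p−2) w' w₁ w₂ + w₂' w' + σ⁻¹ x w₂ w' + w₁ w' ] = −∫ (w')²`. -/
theorem cancellation_identity
    (p : ℝ) (hp : 1 < p) (σ : ℝ) (hσ : σ = (p + 1) / (p - 1) - 1 / 2)
    (w : ℝ → ℝ)
    (hw_pos : ∀ x, 0 < w x)
    (hw_smooth : ContDiff ℝ 2 w)
    (hw_eq : ∀ x, deriv (deriv w) x - w x + w x ^ p = 0)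
    (hdecay : ∃ C₀ > (0:ℝ), ∃ a > (0:ℝ),
      ∀ x : ℝ, w x + |deriv w x| ≤ C₀ * Real.exp (-a * |x|))
    (w₂ : ℝ → ℝ)
    (hw₂ : w₂ = fun x => -(w x) / (p - 1) - (1 / 2) * x * deriv w x)
    (w₁ : ℝ → ℝ)
    (hw₁_smooth : ContDiff ℝ 2 w₁)
    (hw₁_bdd : ∃ M : ℝ, ∀ x : ℝ, |w₁ x| + |deriv w₁ x| ≤ M)
    (hw₁_eq : ∀ x : ℝ,
      -(deriv (deriv w₁) x) + w₁ x - p * w x ^ (p - 1) * w₁ x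
        = deriv w x + σ⁻¹ * x * w x) :
    (∫ x : ℝ,
        (p * (p - 1) * w x ^ (p - 2) * deriv w x * w₁ x * w₂ x
          + deriv w₂ x * deriv w x
          + σ⁻¹ * x * w₂ x * deriv w x
          + w₁ x * deriv w x))
      = -(∫ x : ℝ, (deriv w x) ^ 2) := by
  obtain ⟨C, hC, a, ha, hdec⟩ := hdecay
  obtain ⟨M, hM⟩ := hw₁_bdd
  have hp1 : p - 1 ≠ 0 := by linarith
  have hp2 : p + 1 ≠ 0 := by linarith
  have hp3 : p + 3 ≠ 0 := by linarith
  -- smoothness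
  have dw : ∀ x, HasDerivAt w (deriv w x) x := fun x =>
    (hw_smooth.differentiable (by norm_num) x).hasDerivAt
  have cd : ContDiff ℝ 1 (deriv w) := hw_smooth.deriv'
  have dv : ∀ x, HasDerivAt (deriv w) (w x - w x ^ p) x := fun x => by
    have := (cd.differentiable (by norm_num) x).hasDerivAt
    have e : deriv (deriv w) x = w x - w x ^ p := by linarith [hw_eq x]
    rwa [e] at this
  have dw1 : ∀ x, HasDerivAt w₁ (deriv w₁ x) x := fun x =>
    (hw₁_smooth.differentiable (by norm_num) x).hasDerivAt
  have cd1 : ContDiff ℝ 1 (deriv w₁) := hw₁_smooth.deriv'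
  have du : ∀ x, HasDerivAt (deriv w₁)
      (w₁ x - p * w x ^ (p - 1) * w₁ x - deriv w x - σ⁻¹ * x * w x) x := fun x => by
    have := (cd1.differentiable (by norm_num) x).hasDerivAt
    have e : deriv (deriv w₁) x =
      w₁ x - p * w x ^ (p - 1) * w₁ x - deriv w x - σ⁻¹ * x * w x := by linarith [hw₁_eq x]
    rwa [e] at this
  have cw : Continuous w := hw_smooth.continuous
  have cv : Continuous (deriv w) := cd.continuous
  have cw1 : Continuous w₁ := hw₁_smooth.continuous
  generalize hv : deriv w = v at *
  generalize hu : deriv w₁ = u at *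
  have dpow : ∀ (q : ℝ) x, HasDerivAt (fun y => w y ^ q) (v x * q * w x ^ (q - 1)) x :=
    fun q x => (dw x).rpow_const (Or.inl (hw_pos x).ne')
  have cpow : ∀ q : ℝ, Continuous (fun y => w y ^ q) := fun q =>
    cw.rpow_const fun x => Or.inl (hw_pos x).ne'
  have q1 : ∀ x, w x ^ (p - 1) = w x ^ (p - 2) * w x := fun x => by
    rw [← rpow_add_one (hw_pos x).ne']; congr 1; ring
  have q0 : ∀ x, w x ^ p = w x ^ (p - 2) * w x ^ 2 := fun x => by
    have : w x ^ p = w x ^ (p - 1) * w x := by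
      rw [← rpow_add_one (hw_pos x).ne']; congr 1; ring
    rw [this, q1]; ring
  have q3 : ∀ x, w x ^ (p + 1) = w x ^ (p - 2) * w x ^ 3 := fun x => by
    rw [rpow_add_one (hw_pos x).ne', q0]; ring
  -- decay
  have Ew : ED w := ⟨C, a, ha, fun x => by
    rw [abs_of_pos (hw_pos x)]; linarith [hdec x, abs_nonneg (v x)]⟩
  have Ev : ED v := ⟨C, a, ha, fun x => by linarith [hdec x, hw_pos x]⟩
  have Bw1 : BD w₁ := ⟨M, fun x => by linarith [hM x, abs_nonneg (u x)]⟩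
  have Bu : BD u := ⟨M, fun x => by linarith [hM x, abs_nonneg (w₁ x)]⟩
  obtain ⟨K, hK⟩ := Ew.bd
  have hwK : ∀ x, w x ≤ K := fun x => (le_abs_self _).trans (hK x)
  have Bq1 : BD (fun x => w x ^ (p - 1)) := ⟨K ^ (p - 1), fun x => by
    rw [abs_of_pos (rpow_pos_of_pos (hw_pos x) _)]
    exact rpow_le_rpow (hw_pos x).le (hwK x) (by linarith)⟩
  have Eq0 : ED (fun x => w x ^ p) := by
    have := ED.bmul Bq1 Ew
    convert this using 2 with x
    rw [q1, q0]; ring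
  have Eq3 : ED (fun x => w x ^ (p + 1)) := by
    have := ED.mul Eq0 Ew
    convert this using 2 with x
    rw [q3, q0]; ring
  -- energy
  have topA : Tendsto (fun x : ℝ => |x|) atTop atTop := tendsto_abs_atTop_atTop
  have botA : Tendsto (fun x : ℝ => |x|) atBot atTop := tendsto_abs_atBot_atTop
  have energy : ∀ x, v x * v x + (-1) * (w x * w x) + 2 / (p + 1) * w x ^ (p + 1) = 0 := by
    set E : ℝ → ℝ := fun x => v x * v x + (-1) * (w x * w x) + 2 / (p + 1) * w x ^ (p + 1) with hE
    have dE : ∀ x, HasDerivAt E 0 x := fun x => by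
      have := (((dv x).mul (dv x)).add (((dw x).mul (dw x)).const_mul (-1))).add
        ((dpow (p + 1) x).const_mul (2 / (p + 1)))
      refine hda this (fun y => rfl) ?_
      rw [show p + 1 - 1 = p by ring]
      field_simp
      ring
    have EE : ED E := ((Ev.mul Ev).add ((Ew.mul Ew).cmul _)).add (Eq3.cmul _)
    have hconst : ∀ x, E x = E 0 := fun x =>
      is_const_of_deriv_eq_zero (fun y => (dE y).differentiableAt) (fun y => (dE y).deriv) x 0
    have t1 := EE.tendsto topA
    have t2 : Tendsto E atTop (𝓝 (E 0)) :=
      tendsto_const_nhds.congr fun x => (hconst x).symm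
    intro x
    exact (hconst x).trans (tendsto_nhds_unique t2 t1)
  have hvw : ∀ x, |v x| ≤ w x := fun x => by
    refine abs_le_of_sq_le_sq ?_ (hw_pos x).le
    have h1 := energy x
    have h2 : 0 ≤ 2 / (p + 1) * w x ^ (p + 1) :=
      mul_nonneg (div_nonneg (by norm_num) (by linarith)) (rpow_nonneg (hw_pos x).le _)
    nlinarith
  have Bpv : BD (fun x => w x ^ (p - 2) * v x) := by
    obtain ⟨L, hL⟩ := Bq1
    refine ⟨L, fun x => ?_⟩
    have h0 := rpow_pos_of_pos (hw_pos x) (p - 2)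
    have := hL x
    simp only [q1, abs_mul, abs_of_pos h0, abs_of_pos (hw_pos x)] at this ⊢
    exact (mul_le_mul_of_nonneg_left (hvw x) h0.le).trans this
  -- the function w₂ and its derivative
  set d2 : ℝ → ℝ := fun x =>
    (-(1 / (p - 1) + 1 / 2)) * v x + (-1 / 2) * (x * (w x + (-1) * w x ^ p)) with hd2
  have dw2 : ∀ x, HasDerivAt w₂ (d2 x) x := fun x => by
    have := ((dw x).const_mul (-1 / (p - 1))).sub
      (((hasDerivAt_id x).const_mul (1 / 2)).mul (dv x))
    rw [hw₂]
    refine hda this (fun y => ?_) ?_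
    · simp; ring
    · simp only [hd2, id]; field_simp; ring
  have hw2e : ∀ x, w₂ x = (-1 / (p - 1)) * w x + (-1 / 2) * (x * v x) := fun x => by
    rw [hw₂]; ring
  have Ew2 : ED w₂ := by
    rw [funext hw2e]
    exact (Ew.cmul _).add (Ev.xmul.cmul _)
  have Ed2 : ED d2 := (Ev.cmul _).add ((Ew.add (Eq0.cmul _)).xmul.cmul _)
  have cw2 : Continuous w₂ := continuous_iff_continuousAt.2 fun x => (dw2 x).continuousAt
  have cd2 : Continuous d2 := by
    have := cpow p
    rw [hd2]; fun_prop
  have hd2' : deriv w₂ = d2 := funext fun x => (dw2 x).deriv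
  set d22 : ℝ → ℝ := fun x => w₂ x + (-p) * (w x ^ (p - 1) * w₂ x) + (-1) * w x with hd22
  have dd2 : ∀ x, HasDerivAt d2 (d22 x) x := fun x => by
    have := ((dv x).const_mul (-(1 / (p - 1) + 1 / 2))).add
      (((hasDerivAt_id x).mul ((dw x).add ((dpow p x).const_mul (-1)))).const_mul (-1 / 2))
    refine hda this (fun y => rfl) ?_
    simp only [hd22, hw2e, id, q1, q0, Pi.add_apply]
    field_simp
    ring
  have Ed22 : ED d22 := (Ew2.add ((ED.bmul Bq1 Ew2).cmul _)).add (Ew.cmul _)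
  have dd22 : ∀ x, HasDerivAt d22
      (d2 x - p * ((p - 1) * w x ^ (p - 2) * v x * w₂ x + w x ^ (p - 1) * d2 x) - v x) x :=
    fun x => by
    have := ((dw2 x).add (((dpow (p - 1) x).mul (dw2 x)).const_mul (-p))).add
      ((dw x).const_mul (-1))
    refine hda this (fun y => rfl) ?_
    rw [show p - 1 - 1 = p - 2 by ring]
    ring
  -- antiderivative
  have hσ' : σ = (p + 3) / (2 * (p - 1)) := by rw [hσ]; field_simp; ring
  have hs : σ⁻¹ = 2 * (p - 1) / (p + 3) := by rw [hσ', inv_div]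
  set F : ℝ → ℝ := fun x => u x * d2 x + (-1) * (w₁ x * d22 x) + σ⁻¹ * (x * (w x * w₂ x))
    + (-1 / 2) * (x * (v x * v x)) + (σ⁻¹ / 4) * (x * (w x * w x))
    + ((1 - σ) * (2 / (p + 3))) * (w x * v x) with hF
  have EF : ED F := (((((ED.bmul Bu Ed2).add ((ED.bmul Bw1 Ed22).cmul _)).add
    ((Ew.mul Ew2).xmul.cmul _)).add ((Ev.mul Ev).xmul.cmul _)).add
    ((Ew.mul Ew).xmul.cmul _)).add ((Ew.mul Ev).cmul _)
  set G : ℝ → ℝ := fun x => p * (p - 1) * w x ^ (p - 2) * v x * w₁ x * w₂ x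
          + d2 x * v x + σ⁻¹ * x * w₂ x * v x + w₁ x * v x with hG
  have EG : ED G := by
    have := ((((ED.bmul Bpv (ED.bmul Bw1 Ew2)).cmul (p * (p - 1))).add (Ed2.mul Ev)).add
      ((Ew2.mul Ev).xmul.cmul σ⁻¹)).add (ED.bmul Bw1 Ev)
    convert this using 2 with x
    simp only [hG]; ring
  have cG : Continuous G := by
    have := cpow (p - 2)
    rw [hG]; fun_prop
  have IG : Integrable G := EG.integrable cG
  have Iv : Integrable (fun x => v x ^ 2) := by
    have : ED (fun x => v x ^ 2) := by
      have := Ev.mul Ev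
      convert this using 2 with x
      ring
    exact this.integrable (by fun_prop)
  have dF : ∀ x, HasDerivAt F (G x + v x ^ 2) x := fun x => by
    have h := (((((du x).mul (dd2 x)).add (((dw1 x).mul (dd22 x)).const_mul (-1))).add
      (((hasDerivAt_id x).mul ((dw x).mul (dw2 x))).const_mul σ⁻¹)).add
      (((hasDerivAt_id x).mul ((dv x).mul (dv x))).const_mul (-1 / 2))).add
      (((hasDerivAt_id x).mul ((dw x).mul (dw x))).const_mul (σ⁻¹ / 4)) |>.add
      (((dw x).mul (dv x)).const_mul ((1 - σ) * (2 / (p + 3))))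
    refine hda h (fun y => rfl) ?_
    have e := energy x
    have e' : w x ^ (p - 2) * w x ^ 3 = (p + 1) / 2 * (w x ^ 2 - v x ^ 2) := by
      rw [← q3]; field_simp at e ⊢; linarith
    simp only [hG, hd22, id, q1, q0, Pi.mul_apply]
    simp only [hd2, hw2e, q0]
    rw [hs, hσ']
    generalize w x ^ (p - 2) = P at *
    linear_combination (norm := skip) ((1 - (p + 3) / (2 * (p - 1))) * (2 / (p + 3))) * e'
    field_simp
    ring
  have key := integral_of_hasDerivAt_of_tendsto dF (IG.add Iv) (EF.tendsto botA) (EF.tendsto topA)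
  rw [integral_add IG Iv] at key
  rw [hd2']
  change ∫ x, G x = _
  linarith
end
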